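/- arXiv:2603.25995 — 3 statements merged into one kernel-verified Lean document; each statement's English description precedes it below -/
import Mathlib

section
/- For every real number α > 0 there exists a constant C_α > 0 such that for all A > 0, all t > 0 and all ξ, η ∈ ℝ, one has ∫₀ᵗ |η + A s ξ|^α ds ≥ C_α ( |η|^α + (A t)^α |ξ|^α ) t. -/
/-! Put `g s = |η + A s ξ|`. Since `s ↦ η + A s ξ` is affine, it is recovered from its values at
`s` and `s + t / 2`; for `s ∈ [0, t / 2]` this bounds both `|η|` and `A t |ξ|` by
`2 (g s + g (s + t / 2))`. Taking powers, `|η| ^ α + (A t) ^ α |ξ| ^ α` is at most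
`2 * 4 ^ α * (g s ^ α + g (s + t / 2) ^ α)`. Integrating over `s ∈ [0, t / 2]`, where the two terms
on the right add up to the whole integral over `[0, t]`, gives the claim with
`C = 1 / (4 * 4 ^ α)`. -/

lemma rpow_le_of_le_two_mul_add {α x a b : ℝ} (hα : 0 < α) (hx : 0 ≤ x) (ha : 0 ≤ a)
    (hb : 0 ≤ b) (h : x ≤ 2 * (a + b)) : x ^ α ≤ 4 ^ α * (a ^ α + b ^ α) := by
  have ha' := Real.rpow_nonneg ha α
  have hb' := Real.rpow_nonneg hb α
  rcases le_total a b with hab | hab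
  · calc x ^ α ≤ (4 * b) ^ α := Real.rpow_le_rpow hx (by linarith) hα.le
      _ = 4 ^ α * b ^ α := Real.mul_rpow (by norm_num) hb
      _ ≤ _ := by gcongr; linarith
  · calc x ^ α ≤ (4 * a) ^ α := Real.rpow_le_rpow hx (by linarith) hα.le
      _ = 4 ^ α * a ^ α := Real.mul_rpow (by norm_num) ha
      _ ≤ _ := by gcongr; linarith

/-- The slope of an affine function is controlled by its values at two points `t / 2` apart. -/
lemma slope_le {A t ξ η s : ℝ} (hA : 0 < A) (ht : 0 < t) :
    A * t * |ξ| ≤ 2 * (|η + A * s * ξ| + |η + A * (s + t / 2) * ξ|) := by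
  have h : A * t * ξ = 2 * ((η + A * (s + t / 2) * ξ) - (η + A * s * ξ)) := by ring
  have h2 : A * t * |ξ| = |A * t * ξ| := by rw [abs_mul, abs_of_pos (mul_pos hA ht)]
  rw [h2, h, abs_mul, abs_two]
  have := abs_sub (η + A * (s + t / 2) * ξ) (η + A * s * ξ)
  linarith

/-- The value at `0` of an affine function is controlled by its values at `s` and `s + t / 2`. -/
lemma value_le {A t ξ η s : ℝ} (ht : 0 < t) (hs : 0 ≤ s) (hst : s ≤ t / 2) :
    |η| ≤ 2 * (|η + A * s * ξ| + |η + A * (s + t / 2) * ξ|) := by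
  -- Linear extrapolation to `0`, multiplied by `t / 2`; both weights are at most `t` in size.
  have h : t / 2 * η = (s + t / 2) * (η + A * s * ξ) - s * (η + A * (s + t / 2) * ξ) := by ring
  have h1 : t / 2 * |η| ≤ (s + t / 2) * |η + A * s * ξ| + s * |η + A * (s + t / 2) * ξ| := by
    calc t / 2 * |η| = |t / 2 * η| := by rw [abs_mul, abs_of_pos (half_pos ht)]
      _ ≤ |(s + t / 2) * (η + A * s * ξ)| + |s * (η + A * (s + t / 2) * ξ)| := by
        rw [h]; exact abs_sub _ _
      _ = _ := by
        rw [abs_mul, abs_mul, abs_of_nonneg hs, abs_of_nonneg (by linarith : 0 ≤ s + t / 2)]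
  have h2 : (s + t / 2) * |η + A * s * ξ| ≤ t * |η + A * s * ξ| := by gcongr; linarith
  have h3 : s * |η + A * (s + t / 2) * ξ| ≤ t * |η + A * (s + t / 2) * ξ| := by gcongr; linarith
  have h4 : t * |η| ≤ t * (2 * (|η + A * s * ξ| + |η + A * (s + t / 2) * ξ|)) := by linarith
  exact le_of_mul_le_mul_left h4 ht

/-- For every real `α > 0` there is a constant `C_α > 0` such that for all
`A > 0`, `t > 0` and all `ξ, η ∈ ℝ`, one has
`∫₀ᵗ |η + A s ξ| ^ α ds ≥ C_α (|η| ^ α + (A t) ^ α |ξ| ^ α) t`. -/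
theorem stmt_0 (α : ℝ) (hα : 0 < α) :
    ∃ C : ℝ, 0 < C ∧ ∀ A t ξ η : ℝ, 0 < A → 0 < t →
      (∫ s in (0:ℝ)..t, |η + A * s * ξ| ^ α) ≥
        C * (|η| ^ α + (A * t) ^ α * |ξ| ^ α) * t := by
  have h4 : (0:ℝ) < 4 ^ α := by positivity
  refine ⟨1 / (4 * 4 ^ α), by positivity, fun A t ξ η hA ht => ?_⟩
  have hc : Continuous fun s : ℝ => |η + A * s * ξ| ^ α :=
    Continuous.rpow_const (by fun_prop) fun _ => Or.inr hα.le
  have hc' : Continuous fun s : ℝ => |η + A * (s + t / 2) * ξ| ^ α :=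
    Continuous.rpow_const (by fun_prop) fun _ => Or.inr hα.le
  have hsplit : (∫ s in (0:ℝ)..t, |η + A * s * ξ| ^ α) =
      ∫ s in (0:ℝ)..(t / 2), (|η + A * s * ξ| ^ α + |η + A * (s + t / 2) * ξ| ^ α) := by
    rw [intervalIntegral.integral_add (hc.intervalIntegrable _ _) (hc'.intervalIntegrable _ _),
      intervalIntegral.integral_comp_add_right (fun s => |η + A * s * ξ| ^ α) (t / 2),
      zero_add, add_halves, intervalIntegral.integral_add_adjacent_intervals
        (hc.intervalIntegrable _ _) (hc.intervalIntegrable _ _)]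
  have hmono : (∫ _ in (0:ℝ)..(t / 2),
        (1 / (2 * 4 ^ α)) * (|η| ^ α + (A * t) ^ α * |ξ| ^ α)) ≤
      ∫ s in (0:ℝ)..(t / 2), (|η + A * s * ξ| ^ α + |η + A * (s + t / 2) * ξ| ^ α) := by
    refine intervalIntegral.integral_mono_on (half_pos ht).le
      (continuous_const.intervalIntegrable _ _) ((hc.add hc').intervalIntegrable _ _)
      fun s hs => ?_
    have e1 := rpow_le_of_le_two_mul_add hα (abs_nonneg η) (abs_nonneg _) (abs_nonneg _)
      (value_le (A := A) (ξ := ξ) ht hs.1 hs.2)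
    have e2 := rpow_le_of_le_two_mul_add hα (by positivity) (abs_nonneg _) (abs_nonneg _)
      (slope_le (ξ := ξ) (η := η) (s := s) hA ht)
    rw [Real.mul_rpow (by positivity) (abs_nonneg ξ)] at e2
    rw [one_div_mul_eq_div, div_le_iff₀ (by positivity)]
    linarith
  rw [hsplit, ge_iff_le]
  refine le_trans (le_of_eq ?_) hmono
  rw [intervalIntegral.integral_const, smul_eq_mul]
  field_simp
  ring
end

section
/- There exists an absolute constant c > 0 such that for all A > 0, all t > 0 and all (ξ, η, ζ) ∈ ℝ³, ∫₀ᵗ ( ξ² + (η + A ξ s)² + ζ² )² ds ≥ c ( (1 + (A t)⁴) ξ⁴ + η⁴ + ζ⁴ ) t. Consequently, for every C₀ > 0 there is a constant C̃₀ > 0 with exp( − C₀ ∫₀ᵗ ( ξ² + (η + A ξ s)² + ζ² )² ds ) ≤ exp( − C̃₀ [ (1 + (A t)⁴) ξ⁴ t + η⁴ t + ζ⁴ t ] ). -/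
/-!
Since `(a² + b² + c²)² ≥ a⁴ + b⁴ + c⁴`, everything reduces to bounding `∫₀ᵗ (η + b s)⁴ ds` from
below, where `b = A ξ`. With `B = b t` and the midpoint value `y = η + B / 2`, this integral equals
`(y⁴ + y² B² / 2 + B⁴ / 80) t`, a form with nonnegative terms that vanishes only for `η = B = 0`;
it therefore dominates a multiple of `(η⁴ + B⁴) t`, and `1 / 120` is an admissible constant
(`quartic_lower_bound`). The exponential estimate follows by monotonicity, with `C̃₀ = C₀ / 120`.
-/

open MeasureTheory

theorem integral_linear_pow_four (η b k t : ℝ) :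
    ∫ s in (0:ℝ)..t, (k + (η + b * s) ^ 4) =
      (k + ((η + b * t / 2) ^ 4 + (η + b * t / 2) ^ 2 * (b * t) ^ 2 / 2 + (b * t) ^ 4 / 80)) * t := by
  -- the antiderivative is expanded in powers of `s` so that `b = 0` needs no separate case
  have hderiv : ∀ s ∈ Set.uIcc 0 t, HasDerivAt
      (fun s : ℝ => (k + η ^ 4) * s + 2 * η ^ 3 * b * s ^ 2 + 2 * η ^ 2 * b ^ 2 * s ^ 3
        + η * b ^ 3 * s ^ 4 + b ^ 4 / 5 * s ^ 5) (k + (η + b * s) ^ 4) s := by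
    intro s _
    have h := (((((hasDerivAt_id s).const_mul (k + η ^ 4)).add
      ((hasDerivAt_pow 2 s).const_mul (2 * η ^ 3 * b))).add
      ((hasDerivAt_pow 3 s).const_mul (2 * η ^ 2 * b ^ 2))).add
      ((hasDerivAt_pow 4 s).const_mul (η * b ^ 3))).add
      ((hasDerivAt_pow 5 s).const_mul (b ^ 4 / 5))
    refine h.congr_deriv ?_
    norm_num
    ring
  rw [intervalIntegral.integral_eq_sub_of_hasDerivAt hderiv
    (Continuous.intervalIntegrable (by fun_prop) _ _)]
  ring

theorem quartic_lower_bound (η B : ℝ) :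
    1 / 120 * (η ^ 4 + B ^ 4) ≤
      (η + B / 2) ^ 4 + (η + B / 2) ^ 2 * B ^ 2 / 2 + B ^ 4 / 80 := by
  obtain ⟨y, rfl⟩ : ∃ y, η = y - B / 2 := ⟨η + B / 2, by ring⟩
  -- convexity of the fourth power
  have h : (y - B / 2) ^ 4 ≤ 8 * (y ^ 4 + (B / 2) ^ 4) := by
    have h1 : (y - B / 2) ^ 2 ≤ 2 * (y ^ 2 + (B / 2) ^ 2) := by
      nlinarith [sq_nonneg (y + B / 2)]
    have h2 := pow_le_pow_left₀ (sq_nonneg _) h1 2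
    nlinarith [sq_nonneg (y ^ 2 - (B / 2) ^ 2)]
  have hy : 0 ≤ y ^ 4 := by positivity
  have hB : 0 ≤ B ^ 4 := by positivity
  have hyB : 0 ≤ y ^ 2 * B ^ 2 := by positivity
  rw [sub_add_cancel]
  linarith

theorem integral_lower_bound (A t ξ η ζ : ℝ) (ht : 0 < t) :
    1 / 120 * ((1 + (A * t) ^ 4) * ξ ^ 4 + η ^ 4 + ζ ^ 4) * t ≤
      ∫ s in (0:ℝ)..t, (ξ ^ 2 + (η + A * ξ * s) ^ 2 + ζ ^ 2) ^ 2 := by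
  have hmono : ∫ s in (0:ℝ)..t, (ξ ^ 4 + ζ ^ 4 + (η + A * ξ * s) ^ 4) ≤
      ∫ s in (0:ℝ)..t, (ξ ^ 2 + (η + A * ξ * s) ^ 2 + ζ ^ 2) ^ 2 := by
    refine intervalIntegral.integral_mono_on ht.le
      (Continuous.intervalIntegrable (by fun_prop) _ _)
      (Continuous.intervalIntegrable (by fun_prop) _ _) fun s _ => ?_
    generalize η + A * ξ * s = x
    have h1 : 0 ≤ ξ ^ 2 * x ^ 2 := by positivity
    have h2 : 0 ≤ ξ ^ 2 * ζ ^ 2 := by positivity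
    have h3 : 0 ≤ x ^ 2 * ζ ^ 2 := by positivity
    linarith
  refine le_trans ?_ hmono
  rw [integral_linear_pow_four]
  refine mul_le_mul_of_nonneg_right ?_ ht.le
  have h := quartic_lower_bound η (A * ξ * t)
  have hξ : 0 ≤ ξ ^ 4 := by positivity
  have hζ : 0 ≤ ζ ^ 4 := by positivity
  have hB : (A * ξ * t) ^ 4 = (A * t) ^ 4 * ξ ^ 4 := by ring
  rw [hB] at h ⊢
  linarith

/-- There exists an absolute constant `c > 0` such that for all `A > 0`,
`t > 0` and `(ξ, η, ζ) ∈ ℝ³`,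
`∫₀ᵗ (ξ² + (η + A ξ s)² + ζ²)² ds ≥ c ((1 + (A t)⁴) ξ⁴ + η⁴ + ζ⁴) t`.
Consequently, for every `C₀ > 0` there is `C̃₀ > 0` with
`exp(-C₀ ∫₀ᵗ (ξ² + (η + A ξ s)² + ζ²)² ds) ≤ exp(-C̃₀ [(1 + (A t)⁴) ξ⁴ t + η⁴ t + ζ⁴ t])`. -/
theorem stmt_3 :
    (∃ c : ℝ, 0 < c ∧ ∀ A t ξ η ζ : ℝ, 0 < A → 0 < t →
      (∫ s in (0:ℝ)..t, (ξ ^ 2 + (η + A * ξ * s) ^ 2 + ζ ^ 2) ^ 2) ≥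
        c * ((1 + (A * t) ^ 4) * ξ ^ 4 + η ^ 4 + ζ ^ 4) * t) ∧
    (∀ C₀ : ℝ, 0 < C₀ → ∃ C₀' : ℝ, 0 < C₀' ∧ ∀ A t ξ η ζ : ℝ, 0 < A → 0 < t →
      Real.exp (-C₀ * ∫ s in (0:ℝ)..t, (ξ ^ 2 + (η + A * ξ * s) ^ 2 + ζ ^ 2) ^ 2) ≤
        Real.exp (-C₀' * ((1 + (A * t) ^ 4) * ξ ^ 4 * t + η ^ 4 * t + ζ ^ 4 * t))) := by
  refine ⟨⟨1 / 120, by norm_num, fun A t ξ η ζ _ ht => integral_lower_bound A t ξ η ζ ht⟩,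
    fun C₀ hC => ⟨C₀ / 120, by positivity, fun A t ξ η ζ _ ht => Real.exp_le_exp.mpr ?_⟩⟩
  have h := mul_le_mul_of_nonneg_left (integral_lower_bound A t ξ η ζ ht) hC.le
  linarith
end

section
/- For every p with 2 ≤ p ≤ ∞ there exists a constant C > 0 such that for all t > 0, all (x', y', z') ∈ ℝ³ and all (x, y, z) ∈ ℝ³: (i) ‖ G(t, · − x', ·, · − z'; y') ‖_{L^p(ℝ³)} ≤ C e^{−ε t} t^{−(3/4)(1 − 1/p)} (1 + (A t)⁴)^{−(1/4)(1 − 1/p)}, where the L^p norm is taken over the unprimed variables (x, y, z); and (ii) ‖ G(t, x − ·, y, z − ·; ·) ‖_{L^p(ℝ³)} ≤ C e^{−ε t} t^{−(3/4)(1 − 1/p)} (1 + (A t)⁴)^{−(1/4)(1 − 1/p)}, where the L^p norm is taken over the primed variables (x', y', z'). The constant C is independent of t, of (x', y', z') and of (x, y, z). -/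
/-!
Up to the factor `2π` in the kernel, `G` is a Fourier transform of `Ĝ₂` times a unimodular phase: directly
in the unprimed variables (`GreenG_eq_osc`), and after a volume-preserving shear in the primed
variables (`GreenG_eq_osc'`, `shear_mp`). The `L^p` bounds thus follow by interpolation (`interp`) from
`‖G‖_∞ ≤ ‖Ĝ₂‖_1` and Plancherel, `‖G‖_2 = (2π)^{3/2} ‖Ĝ₂‖_2` (`osc_plancherel`).

It remains to bound `Ĝ₂`. As `κ - ε > 1/16`, there is `c > 0` with `v - κ - 4 v² ≤ -ε - c v²`
for all `v` (`symbol_le`). Moreover `v² ≥ ξ⁴ + (η + A ξ s)⁴ + ζ⁴`, and the integral of the middle term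
over `[0, t]` is bounded below by a multiple of `t (η⁴ + (A t ξ)⁴)`
(`integral_affine_pow_four_ge`). Hence (`Ghat2_le`)
`Ĝ₂ ≤ e^{-ε t} exp(-c' t ((1 + (A t)⁴) ξ⁴ + η⁴ + ζ⁴))`, and the right side and its square have explicit
product integrals proportional to `t^{-3/4} (1 + (A t)⁴)^{-1/4}` (`integral_quartic₃`), which gives
both endpoint bounds (`osc_bounds`).
-/

open MeasureTheory
open scoped ENNReal

/-- The symbol `v(s; ξ, η, ζ) = ξ² + (η + A ξ s)² + ζ²`. -/
noncomputable def vA (A ξ η ζ s : ℝ) : ℝ := ξ ^ 2 + (η + A * ξ * s) ^ 2 + ζ ^ 2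

/-- The spectral Green's function `Ĝ₂`. -/
noncomputable def Ghat2 (A κ t ξ η ζ : ℝ) : ℝ :=
  Real.exp (∫ s in (0:ℝ)..t, (vA A ξ η ζ s - κ - 4 * vA A ξ η ζ s ^ 2))

/-- The Green's function `G(t, x - x', y, z - z'; y')` of the linearized equation, given by
the oscillatory integral
`∫_{ℝ³} e^{i(xξ + yη + zζ)} e^{-i x'ξ - i y'(η + Aξ t) - i z'ζ} Ĝ₂(t, ξ, η, ζ) dξ dη dζ`. -/
noncomputable def GreenG (A κ t x y z x' y' z' : ℝ) : ℂ :=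
  ∫ q : ℝ × ℝ × ℝ,
    Complex.exp (Complex.I * ((x * q.1 + y * q.2.1 + z * q.2.2 : ℝ) : ℂ)) *
      Complex.exp (-Complex.I *
        ((x' * q.1 + y' * (q.2.1 + A * q.1 * t) + z' * q.2.2 : ℝ) : ℂ)) *
      (Ghat2 A κ t q.1 q.2.1 q.2.2 : ℂ)

open scoped FourierTransform SchwartzMap

/-! ### Plancherel on `L¹ ∩ L²` and interpolation -/

/-- On `L¹ ∩ L²` the Fourier integral agrees almost everywhere with the Fourier transform obtained by
extending the isometry from Schwartz functions. Both sides have the same integral against every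
test function, by self-adjointness of the Fourier integral and by compatibility of the `L²` transform
with the one on tempered distributions. -/
lemma fourier_ae_eq {E : Type*} [NormedAddCommGroup E] [InnerProductSpace ℝ E]
    [FiniteDimensional ℝ E] [MeasurableSpace E] [BorelSpace E]
    {f : E → ℂ} (h1 : Integrable f) (h2 : MemLp f 2) :
    (𝓕 f : E → ℂ) =ᵐ[volume] (𝓕 (h2.toLp f) : Lp ℂ 2 (volume : Measure E)) := by
  have hcont : Continuous (𝓕 f : E → ℂ) :=
    VectorFourier.fourierIntegral_continuous Real.continuous_fourierChar
      (by exact continuous_inner) h1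
  apply ae_eq_of_integral_contDiff_smul_eq hcont.locallyIntegrable
    ((Lp.memLp _).locallyIntegrable (by norm_num))
  intro g hg hgc
  have hgc' : HasCompactSupport (fun x => (g x : ℂ)) := hgc.comp_left (g := fun r : ℝ => (r:ℂ)) (by simp)
  let φ : 𝓢(E, ℂ) := hgc'.toSchwartzMap (Complex.ofRealCLM.contDiff.comp hg)
  have hφ : ∀ x, φ x = (g x : ℂ) := fun x => rfl
  have e1 : ∫ x, φ x • (𝓕 (h2.toLp f) : Lp ℂ 2 (volume : Measure E)) x
      = ∫ x, (𝓕 φ) x • f x := by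
    have := congrArg (fun T => T φ) (Lp.fourier_toTemperedDistribution_eq (h2.toLp f))
    simp only [TemperedDistribution.fourier_apply, Lp.toTemperedDistribution_apply] at this
    rw [← this]
    apply integral_congr_ae
    filter_upwards [h2.coeFn_toLp] with x hx
    rw [hx]
  have e2 : ∫ x, (𝓕 φ) x • f x = ∫ x, φ x • 𝓕 f x := by
    simpa [SchwartzMap.fourier_coe] using! VectorFourier.integral_fourierIntegral_smul_eq_flip (L := innerₗ E)
      Real.continuous_fourierChar continuous_inner φ.integrable h1
  have e3 := e1.trans e2
  simp only [hφ, Complex.coe_smul] at e3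
  exact e3.symm

lemma plancherel {E : Type*} [NormedAddCommGroup E] [InnerProductSpace ℝ E]
    [FiniteDimensional ℝ E] [MeasurableSpace E] [BorelSpace E]
    {f : E → ℂ} (h1 : Integrable f) (h2 : MemLp f 2) :
    ∫⁻ x, ‖𝓕 f x‖ₑ ^ (2:ℝ) = ∫⁻ x, ‖f x‖ₑ ^ (2:ℝ) := by
  have h : eLpNorm (𝓕 f : E → ℂ) 2 volume = eLpNorm f 2 volume := by
    rw [eLpNorm_congr_ae (fourier_ae_eq h1 h2), ← eLpNorm_congr_ae h2.coeFn_toLp]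
    have := Lp.norm_fourier_eq (h2.toLp f)
    rw [Lp.norm_def, Lp.norm_def, ENNReal.toReal_eq_toReal_iff' (Lp.eLpNorm_ne_top _) (Lp.eLpNorm_ne_top _)] at this
    exact this
  rw [eLpNorm_eq_lintegral_rpow_enorm_toReal (by norm_num) (by norm_num),
    eLpNorm_eq_lintegral_rpow_enorm_toReal (by norm_num) (by norm_num)] at h
  exact ENNReal.rpow_left_injective (by norm_num) h

/-- The elementary interpolation `‖f‖_p^p ≤ ‖f‖_∞^{p-2} ‖f‖_2²` for `2 ≤ p < ∞`; `f` need not be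
measurable. -/
lemma interp {α : Type*} [MeasurableSpace α] {μ : Measure α} {f : α → ℂ} {M N : ℝ} (hM : 0 < M)
    (hN : 0 < N) (hf : ∀ x, ‖f x‖ ≤ M) (h2 : ∫⁻ x, ‖f x‖ₑ ^ (2:ℝ) ∂μ ≤ ENNReal.ofReal N)
    {p : ℝ≥0∞} (hp : 2 ≤ p) (hp' : p ≠ ∞) :
    eLpNorm f p μ ≤ ENNReal.ofReal ((M ^ (p.toReal - 2) * N) ^ (1 / p.toReal)) := by
  have hr : 2 ≤ p.toReal := by
    simpa using ENNReal.toReal_mono hp' hp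
  have hp0 : p ≠ 0 := by rintro rfl; simp at hp
  rw [eLpNorm_eq_lintegral_rpow_enorm_toReal hp0 hp',
    ← ENNReal.ofReal_rpow_of_pos (by positivity)]
  gcongr
  rw [ENNReal.ofReal_mul (by positivity)]
  calc ∫⁻ x, ‖f x‖ₑ ^ p.toReal ∂μ
      ≤ ∫⁻ x, ENNReal.ofReal (M ^ (p.toReal - 2)) * ‖f x‖ₑ ^ (2:ℝ) ∂μ := by
        apply lintegral_mono
        intro x
        dsimp only
        have : p.toReal = (p.toReal - 2) + 2 := by ring
        conv_lhs => rw [this, ENNReal.rpow_add_of_nonneg _ _ (by linarith) (by norm_num)]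
        gcongr
        rw [← ENNReal.ofReal_rpow_of_pos hM]
        apply ENNReal.rpow_le_rpow _ (by linarith)
        rw [← ofReal_norm]
        exact ENNReal.ofReal_le_ofReal (hf x)
    _ = ENNReal.ofReal (M ^ (p.toReal - 2)) * ∫⁻ x, ‖f x‖ₑ ^ (2:ℝ) ∂μ :=
        lintegral_const_mul' _ _ ENNReal.ofReal_ne_top
    _ ≤ _ := by gcongr

/-! ### Oscillatory integrals on `ℝ × ℝ × ℝ` -/

/-- `ℝ³` with the Euclidean norm, as an iterated `L²` product. The plain product `ℝ × ℝ × ℝ` carries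
the sup norm and has no inner product, so Mathlib's Fourier transform is not available on it. -/
abbrev Euc3 : Type := WithLp 2 (ℝ × WithLp 2 (ℝ × ℝ))

/-- The identification of `ℝ × ℝ × ℝ` with Euclidean space. -/
noncomputable def toEuc : ℝ × ℝ × ℝ ≃ᵐ Euc3 :=
  ((MeasurableEquiv.refl ℝ).prodCongr (MeasurableEquiv.toLp 2 (ℝ × ℝ))).trans
    (MeasurableEquiv.toLp 2 _)

lemma toEuc_mp : MeasurePreserving toEuc :=
  ((MeasurePreserving.id volume).prod (WithLp.volume_preserving_toLp ℝ ℝ)).trans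
    (e := (MeasurableEquiv.refl ℝ).prodCongr (MeasurableEquiv.toLp 2 (ℝ × ℝ)))
    (e' := MeasurableEquiv.toLp 2 _)
    (WithLp.volume_preserving_toLp ℝ (WithLp 2 (ℝ × ℝ)))

lemma toEuc_continuous : Continuous toEuc := by
  have : Continuous fun q : ℝ × ℝ × ℝ => WithLp.toLp 2 (q.1, WithLp.toLp 2 (q.2.1, q.2.2)) := by
    fun_prop
  exact this

lemma toEuc_inner (q w : ℝ × ℝ × ℝ) :
    inner ℝ (toEuc q) (toEuc w) = w.1 * q.1 + w.2.1 * q.2.1 + w.2.2 * q.2.2 := by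
  have : inner ℝ (toEuc q) (toEuc w) = inner ℝ (WithLp.toLp 2 (q.1, WithLp.toLp 2 (q.2.1, q.2.2)))
    (WithLp.toLp 2 (w.1, WithLp.toLp 2 (w.2.1, w.2.2))) := rfl
  rw [this]
  simp [WithLp.prod_inner_apply]
  ring

/-- The unnormalized oscillatory integral `w ↦ ∫ e^{i w·q} g(q) dq` on `ℝ³`. -/
noncomputable def osc (g : ℝ × ℝ × ℝ → ℂ) (w : ℝ × ℝ × ℝ) : ℂ :=
  ∫ q : ℝ × ℝ × ℝ, Complex.exp (Complex.I * ((w.1 * q.1 + w.2.1 * q.2.1 + w.2.2 * q.2.2 : ℝ) : ℂ)) * g q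

/-- The factor `-1/(2π)` converts the kernel `e^{i w·q}` into Mathlib's `e^{-2πi q·w}`. -/
lemma osc_eq (g : ℝ × ℝ × ℝ → ℂ) (w : ℝ × ℝ × ℝ) :
    osc g w = 𝓕 (g ∘ toEuc.symm) ((-(2 * Real.pi)⁻¹ : ℝ) • toEuc w) := by
  rw [Real.fourier_eq', ← toEuc_mp.integral_comp' , osc]
  congr 1
  ext q
  simp only [Function.comp, MeasurableEquiv.symm_apply_apply, smul_eq_mul, inner_smul_right,
    toEuc_inner]
  congr 2
  push_cast
  have : (Real.pi : ℂ) ≠ 0 := by exact_mod_cast Real.pi_ne_zero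
  field_simp

lemma osc_continuous {g : ℝ × ℝ × ℝ → ℂ} (hg : Integrable g) : Continuous (osc g) := by
  have h1 : Integrable (g ∘ toEuc.symm) :=
    (toEuc_mp.symm).integrable_comp_of_integrable hg
  have hcont : Continuous (𝓕 (g ∘ toEuc.symm) : Euc3 → ℂ) :=
    VectorFourier.fourierIntegral_continuous Real.continuous_fourierChar
      (by exact continuous_inner) h1
  rw [funext (osc_eq g)]
  have := toEuc_continuous
  exact hcont.comp (by fun_prop)

lemma osc_norm_le (g : ℝ × ℝ × ℝ → ℂ) (w : ℝ × ℝ × ℝ) : ‖osc g w‖ ≤ ∫ q, ‖g q‖ := by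
  refine (norm_integral_le_integral_norm _).trans (le_of_eq ?_)
  congr 1
  ext q
  rw [norm_mul, mul_comm Complex.I, Complex.norm_exp_ofReal_mul_I, one_mul]

/-- Plancherel for `osc`. The constant `K` is `(2π)³`; only its positivity matters. -/
lemma osc_plancherel : ∃ K : ℝ, 0 < K ∧ ∀ g : ℝ × ℝ × ℝ → ℂ, Integrable g → MemLp g 2 →
    ∫⁻ w, ‖osc g w‖ₑ ^ (2:ℝ) = ENNReal.ofReal K * ∫⁻ q, ‖g q‖ₑ ^ (2:ℝ) := by
  have hr : (-(2 * Real.pi)⁻¹ : ℝ) ≠ 0 := by simp [Real.pi_ne_zero]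
  refine ⟨|((-(2 * Real.pi)⁻¹ : ℝ) ^ Module.finrank ℝ Euc3)⁻¹|, by positivity, fun g h1 h2 => ?_⟩
  have h1' : Integrable (g ∘ toEuc.symm) := (toEuc_mp.symm).integrable_comp_of_integrable h1
  have h2' : MemLp (g ∘ toEuc.symm) 2 := h2.comp_measurePreserving toEuc_mp.symm
  have hcont : Continuous (𝓕 (g ∘ toEuc.symm) : Euc3 → ℂ) :=
    VectorFourier.fourierIntegral_continuous Real.continuous_fourierChar
      (by exact continuous_inner) h1'
  have key := plancherel h1' h2'
  have e1 : ∫⁻ x, ‖(g ∘ toEuc.symm) x‖ₑ ^ (2:ℝ) = ∫⁻ q, ‖g q‖ₑ ^ (2:ℝ) :=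
    toEuc_mp.symm.lintegral_comp_emb toEuc.symm.measurableEmbedding (fun q => ‖g q‖ₑ ^ (2:ℝ))
  rw [← e1, ← key]
  simp_rw [osc_eq g]
  rw [toEuc_mp.lintegral_comp_emb toEuc.measurableEmbedding
    (fun v => ‖𝓕 (g ∘ toEuc.symm) ((-(2 * Real.pi)⁻¹ : ℝ) • v)‖ₑ ^ (2:ℝ)),
    ← lintegral_map (μ := volume) (f := fun v => ‖𝓕 (g ∘ toEuc.symm) v‖ₑ ^ (2:ℝ))
      (by fun_prop) (by fun_prop), Measure.map_addHaar_smul _ hr, lintegral_smul_measure]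
  rfl

/-- The map taking primed variables to the frequency-dual variable in `GreenG_eq_osc'`
(with `c = A t`) preserves volume. -/
lemma shear_mp (c : ℝ) : MeasurePreserving
    (fun w : ℝ × ℝ × ℝ => ((-(w.1 + c * w.2.1), -w.2.1, -w.2.2) : ℝ × ℝ × ℝ)) := by
  have h : MeasurePreserving (fun p : (ℝ × ℝ) × ℝ => (-p.1, -(p.2 + c * p.1.1)))
      ((volume : Measure (ℝ × ℝ)).prod volume) ((volume : Measure (ℝ × ℝ)).prod volume) := by
    refine (Measure.measurePreserving_neg (volume : Measure (ℝ × ℝ))).skew_product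
      (g := fun a b => -(b + c * a.1)) (by fun_prop) (Filter.Eventually.of_forall fun a => ?_)
    exact ((Measure.measurePreserving_neg (volume : Measure ℝ)).comp
      (measurePreserving_add_right volume (c * a.1))).map_eq
  exact (Measure.measurePreserving_swap.comp h).comp Measure.measurePreserving_swap

/-! ### Quartic exponential integrals -/

lemma integrable_exp_neg_pow_four : Integrable fun x : ℝ => Real.exp (-x ^ 4) := by
  refine ((integrable_exp_neg_mul_sq (b := 1) one_pos).const_mul (Real.exp 1)).mono'
    (by fun_prop) (Filter.Eventually.of_forall fun x => ?_)
  rw [Real.norm_of_nonneg (Real.exp_pos _).le, ← Real.exp_add]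
  apply Real.exp_le_exp.2
  nlinarith [sq_nonneg (x ^ 2 - 1), sq_nonneg x]

/-- The constant `∫ exp(-x⁴) dx`. -/
noncomputable def quarticMass : ℝ := ∫ x : ℝ, Real.exp (-x ^ 4)

lemma quarticMass_pos : 0 < quarticMass :=
  integral_exp_pos integrable_exp_neg_pow_four

lemma exp_neg_mul_pow_four {k : ℝ} (hk : 0 < k) (x : ℝ) :
    Real.exp (-k * x ^ 4) = Real.exp (-(k ^ (1 / 4 : ℝ) * x) ^ 4) := by
  rw [mul_pow, ← Real.rpow_natCast (k ^ (1 / 4 : ℝ)), ← Real.rpow_mul hk.le]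
  norm_num

lemma integrable_quartic {k : ℝ} (hk : 0 < k) : Integrable fun x : ℝ => Real.exp (-k * x ^ 4) := by
  simp_rw [exp_neg_mul_pow_four hk]
  exact integrable_exp_neg_pow_four.comp_mul_left' (by positivity)

lemma integral_quartic {k : ℝ} (hk : 0 < k) :
    ∫ x : ℝ, Real.exp (-k * x ^ 4) = k ^ (-(1 / 4) : ℝ) * quarticMass := by
  simp_rw [exp_neg_mul_pow_four hk]
  rw [Measure.integral_comp_mul_left (fun x => Real.exp (-x ^ 4)), abs_of_pos (by positivity),
    Real.rpow_neg hk.le, smul_eq_mul, quarticMass]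

lemma exp_quartic_split (k b : ℝ) (q : ℝ × ℝ × ℝ) :
    Real.exp (-k * (b * q.1 ^ 4 + q.2.1 ^ 4 + q.2.2 ^ 4)) =
      Real.exp (-(k * b) * q.1 ^ 4) * (Real.exp (-k * q.2.1 ^ 4) * Real.exp (-k * q.2.2 ^ 4)) := by
  rw [← Real.exp_add, ← Real.exp_add]
  ring_nf

lemma integrable_quartic₃ {k b : ℝ} (hk : 0 < k) (hb : 0 < b) :
    Integrable fun q : ℝ × ℝ × ℝ => Real.exp (-k * (b * q.1 ^ 4 + q.2.1 ^ 4 + q.2.2 ^ 4)) := by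
  simp_rw [exp_quartic_split]
  exact (integrable_quartic (mul_pos hk hb)).mul_prod
    ((integrable_quartic hk).mul_prod (integrable_quartic hk))

lemma integral_quartic₃ {k b : ℝ} (hk : 0 < k) (hb : 0 < b) :
    ∫ q : ℝ × ℝ × ℝ, Real.exp (-k * (b * q.1 ^ 4 + q.2.1 ^ 4 + q.2.2 ^ 4)) =
      quarticMass ^ 3 * (k ^ (-(3 / 4) : ℝ) * b ^ (-(1 / 4) : ℝ)) := by
  simp_rw [exp_quartic_split]
  have h2 : ∫ r : ℝ × ℝ, Real.exp (-k * r.1 ^ 4) * Real.exp (-k * r.2 ^ 4) =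
      (k ^ (-(1 / 4) : ℝ) * quarticMass) * (k ^ (-(1 / 4) : ℝ) * quarticMass) := by
    rw [← integral_quartic hk]
    exact integral_prod_mul (fun x : ℝ => Real.exp (-k * x ^ 4)) (fun x : ℝ => Real.exp (-k * x ^ 4))
  have h3 := integral_prod_mul (μ := (volume : Measure ℝ)) (ν := (volume : Measure (ℝ × ℝ)))
    (fun x : ℝ => Real.exp (-(k * b) * x ^ 4))
    (fun r : ℝ × ℝ => Real.exp (-k * r.1 ^ 4) * Real.exp (-k * r.2 ^ 4))
  rw [h2, integral_quartic (mul_pos hk hb), Real.mul_rpow hk.le hb.le] at h3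
  refine h3.trans ?_
  have e : k ^ (-(3 / 4) : ℝ) = k ^ (-(1 / 4) : ℝ) * k ^ (-(1 / 4) : ℝ) * k ^ (-(1 / 4) : ℝ) := by
    rw [← Real.rpow_add hk, ← Real.rpow_add hk]
    norm_num
  rw [e]
  ring

/-! ### Bounds on the symbol and on its exponential -/

/-- The integral is written in terms of the midpoint value `m = η + a t / 2` and the half-increment
`h = a t / 2`, where all terms are visibly nonnegative. -/
lemma integral_affine_pow_four (η a t : ℝ) :
    ∫ s in (0:ℝ)..t, (η + a * s) ^ 4 = t * ((η + a * t / 2) ^ 4 + 2 * (η + a * t / 2) ^ 2 *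
      (a * t / 2) ^ 2 + (a * t / 2) ^ 4 / 5) := by
  have h : ∀ s ∈ Set.uIcc 0 t, HasDerivAt (fun s : ℝ => η ^ 4 * s + 2 * η ^ 3 * a * s ^ 2 +
      2 * η ^ 2 * a ^ 2 * s ^ 3 + η * a ^ 3 * s ^ 4 + a ^ 4 / 5 * s ^ 5) ((η + a * s) ^ 4) s := by
    intro s _
    have := (((((hasDerivAt_id s).const_mul (η ^ 4)).add
      ((hasDerivAt_pow 2 s).const_mul (2 * η ^ 3 * a))).add
      ((hasDerivAt_pow 3 s).const_mul (2 * η ^ 2 * a ^ 2))).add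
      ((hasDerivAt_pow 4 s).const_mul (η * a ^ 3))).add
      ((hasDerivAt_pow 5 s).const_mul (a ^ 4 / 5))
    convert! this using 1
    push_cast
    ring
  rw [intervalIntegral.integral_eq_sub_of_hasDerivAt h
    (Continuous.intervalIntegrable (by fun_prop) _ _)]
  ring

lemma integral_affine_pow_four_ge (η a : ℝ) {t : ℝ} (ht : 0 ≤ t) :
    t * ((η ^ 4 + (a * t) ^ 4) / 120) ≤ ∫ s in (0:ℝ)..t, (η + a * s) ^ 4 := by
  rw [integral_affine_pow_four]
  apply mul_le_mul_of_nonneg_left _ ht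
  obtain ⟨m, hm⟩ : ∃ m, m = η + a * t / 2 := ⟨_, rfl⟩
  obtain ⟨h, hh⟩ : ∃ h, h = a * t / 2 := ⟨_, rfl⟩
  have e1 : η = m - h := by rw [hm, hh]; ring
  have e2 : a * t = 2 * h := by rw [hh]; ring
  rw [← hm, ← hh, e1, e2]
  have h1 : (m - h) ^ 2 ≤ 2 * (m ^ 2 + h ^ 2) := by nlinarith [sq_nonneg (m + h)]
  have h2 : (m - h) ^ 4 ≤ 8 * (m ^ 4 + h ^ 4) := by
    nlinarith [sq_nonneg (m ^ 2 - h ^ 2), pow_le_pow_left₀ (sq_nonneg (m - h)) h1 2]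
  nlinarith [sq_nonneg (m * h), sq_nonneg (m ^ 2), sq_nonneg (h ^ 2)]

lemma vA_continuous (A ξ η ζ : ℝ) : Continuous (vA A ξ η ζ) := by
  unfold vA
  fun_prop

lemma Ghat2_continuous (A κ t : ℝ) :
    Continuous fun q : ℝ × ℝ × ℝ => Ghat2 A κ t q.1 q.2.1 q.2.2 := by
  unfold Ghat2 vA
  refine Real.continuous_exp.comp
    (intervalIntegral.continuous_parametric_intervalIntegral_of_continuous' ?_ _ _)
  simp only [Function.uncurry_def]
  fun_prop

/-- The coefficient `4 - 1 / (4a)` is positive exactly when `a > 1/16`; the inequality is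
`(v - 2a)² ≥ 0`. -/
lemma symbol_le {a v : ℝ} (ha : 0 < a) : v - a - 4 * v ^ 2 ≤ -(4 - 1 / (4 * a)) * v ^ 2 := by
  have : v ^ 2 / (4 * a) - v + a = (v - 2 * a) ^ 2 / (4 * a) := by
    field_simp
    ring
  have h2 : 0 ≤ (v - 2 * a) ^ 2 / (4 * a) := by positivity
  have h3 : 1 / (4 * a) * v ^ 2 = v ^ 2 / (4 * a) := by ring
  linarith

lemma integral_vA_sq_ge (A ξ η ζ : ℝ) {t : ℝ} (ht : 0 ≤ t) :
    t * (((1 + (A * t) ^ 4) * ξ ^ 4 + η ^ 4 + ζ ^ 4) / 120) ≤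
      ∫ s in (0:ℝ)..t, vA A ξ η ζ s ^ 2 := by
  have hv := vA_continuous A ξ η ζ
  calc _ ≤ t * ((η ^ 4 + (A * ξ * t) ^ 4) / 120) + t * (ξ ^ 4 + ζ ^ 4) := by
        have : 0 ≤ t * (ξ ^ 4 + ζ ^ 4) := by positivity
        nlinarith
    _ ≤ (∫ s in (0:ℝ)..t, (η + A * ξ * s) ^ 4) + ∫ s in (0:ℝ)..t, (ξ ^ 4 + ζ ^ 4) := by
        rw [intervalIntegral.integral_const, smul_eq_mul, sub_zero]
        gcongr
        exact integral_affine_pow_four_ge η (A * ξ) ht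
    _ = ∫ s in (0:ℝ)..t, ((η + A * ξ * s) ^ 4 + (ξ ^ 4 + ζ ^ 4)) := by
        refine (intervalIntegral.integral_add ?_ ?_).symm <;>
          exact Continuous.intervalIntegrable (by fun_prop) _ _
    _ ≤ _ := by
        apply intervalIntegral.integral_mono ht
        · exact Continuous.intervalIntegrable (by fun_prop) _ _
        · exact Continuous.intervalIntegrable (by fun_prop) _ _
        intro s
        have h1 := sq_nonneg ξ
        have h2 := sq_nonneg ζ
        have h3 := sq_nonneg (η + A * ξ * s)
        simp only [vA]
        nlinarith [mul_nonneg h1 h2, mul_nonneg h1 h3, mul_nonneg h2 h3]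

/-- Pointwise quartic exponential bound on `Ĝ₂`. The margin `κ - ε > 1/16` both produces the factor
`e^{-ε t}` and leaves a positive multiple of `∫ v²`, which controls
`t ((1 + (A t)⁴) ξ⁴ + η⁴ + ζ⁴)`. -/
lemma Ghat2_le {A κ ε : ℝ} (hκ : 1 / 16 + ε < κ) : ∃ c : ℝ, 0 < c ∧
    ∀ t ξ η ζ : ℝ, 0 < t → Ghat2 A κ t ξ η ζ ≤ Real.exp (-ε * t) *
      Real.exp (-(c * t) * ((1 + (A * t) ^ 4) * ξ ^ 4 + η ^ 4 + ζ ^ 4)) := by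
  have ha : 1 / 16 < κ - ε := by linarith
  have ha0 : 0 < κ - ε := by linarith
  have hc : 0 < 4 - 1 / (4 * (κ - ε)) := by
    rw [sub_pos, div_lt_iff₀ (by linarith)]
    linarith
  refine ⟨(4 - 1 / (4 * (κ - ε))) / 120, by positivity, fun t ξ η ζ ht => ?_⟩
  set c := 4 - 1 / (4 * (κ - ε)) with hcdef
  have hv := vA_continuous A ξ η ζ
  rw [← Real.exp_add, Ghat2, Real.exp_le_exp]
  calc ∫ s in (0:ℝ)..t, (vA A ξ η ζ s - κ - 4 * vA A ξ η ζ s ^ 2)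
      ≤ ∫ s in (0:ℝ)..t, (-ε + -c * vA A ξ η ζ s ^ 2) := by
        apply intervalIntegral.integral_mono ht.le
        · exact Continuous.intervalIntegrable (by fun_prop) _ _
        · exact Continuous.intervalIntegrable (by fun_prop) _ _
        intro s
        have := symbol_le (v := vA A ξ η ζ s) ha0
        dsimp only
        linarith
    _ = -ε * t + -c * ∫ s in (0:ℝ)..t, vA A ξ η ζ s ^ 2 := by
        rw [intervalIntegral.integral_add, intervalIntegral.integral_const,
          intervalIntegral.integral_const_mul, smul_eq_mul, sub_zero, mul_comm t]
        · exact Continuous.intervalIntegrable (by fun_prop) _ _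
        · exact Continuous.intervalIntegrable (by fun_prop) _ _
    _ ≤ _ := by
        have := mul_le_mul_of_nonneg_left (integral_vA_sq_ge A ξ η ζ ht.le) hc.le
        linarith

/-! ### From spectral bounds to `L^p` bounds -/

lemma norm_phase_mul (θ : ℝ) {a : ℝ} (ha : 0 ≤ a) :
    ‖Complex.exp (Complex.I * (θ : ℂ)) * (a : ℂ)‖ = a := by
  rw [norm_mul, mul_comm Complex.I, Complex.norm_exp_ofReal_mul_I, one_mul, Complex.norm_real,
    Real.norm_of_nonneg ha]

/-- For any function with modulus `Ĝ₂`, the `L^∞` bound (through the `L¹` norm of `Ĝ₂`) and the `L²`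
bound (through Plancherel) of its oscillatory integral. Both decay with the same power
`t^{-3/4} (1 + (A t)⁴)^{-1/4}`. -/
lemma osc_bounds {A κ ε : ℝ} (hκ : 1 / 16 + ε < κ) : ∃ C₁ C₂ : ℝ, 0 < C₁ ∧ 0 < C₂ ∧
    ∀ t : ℝ, 0 < t → ∀ g : ℝ × ℝ × ℝ → ℂ, Continuous g →
      (∀ q, ‖g q‖ = Ghat2 A κ t q.1 q.2.1 q.2.2) →
      Continuous (osc g) ∧
      (∀ w, ‖osc g w‖ ≤ C₁ * Real.exp (-ε * t) *
        (t ^ (-(3 / 4) : ℝ) * (1 + (A * t) ^ 4) ^ (-(1 / 4) : ℝ))) ∧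
      ∫⁻ w, ‖osc g w‖ₑ ^ (2:ℝ) ≤ ENNReal.ofReal (C₂ * Real.exp (-ε * t) ^ 2 *
        (t ^ (-(3 / 4) : ℝ) * (1 + (A * t) ^ 4) ^ (-(1 / 4) : ℝ))) := by
  obtain ⟨c, hc, hG⟩ := Ghat2_le (A := A) hκ
  obtain ⟨K, hK, hP⟩ := osc_plancherel
  have hQ := quarticMass_pos
  refine ⟨quarticMass ^ 3 * c ^ (-(3 / 4) : ℝ), K * (quarticMass ^ 3 * (2 * c) ^ (-(3 / 4) : ℝ)),
    by positivity, by positivity, fun t ht g hgc hg => ?_⟩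
  have hb : 0 < 1 + (A * t) ^ 4 := by positivity
  have hct : 0 < c * t := by positivity
  have hct2 : 0 < (2 * c) * t := by positivity
  have hle : ∀ q, ‖g q‖ ≤ Real.exp (-ε * t) *
      Real.exp (-(c * t) * ((1 + (A * t) ^ 4) * q.1 ^ 4 + q.2.1 ^ 4 + q.2.2 ^ 4)) :=
    fun q => (hg q).trans_le (hG t _ _ _ ht)
  have hle2 : ∀ q, ‖g q‖ ^ 2 ≤ Real.exp (-ε * t) ^ 2 *
      Real.exp (-(2 * c * t) * ((1 + (A * t) ^ 4) * q.1 ^ 4 + q.2.1 ^ 4 + q.2.2 ^ 4)) := by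
    intro q
    refine (pow_le_pow_left₀ (norm_nonneg _) (hle q) 2).trans_eq ?_
    rw [mul_pow, ← Real.exp_nat_mul _ 2, ← Real.exp_nat_mul _ 2]
    congr 2
    push_cast
    ring
  have hi := (integrable_quartic₃ hct hb).const_mul (Real.exp (-ε * t))
  have hi2 := (integrable_quartic₃ hct2 hb).const_mul (Real.exp (-ε * t) ^ 2)
  have g1 : Integrable g := hi.mono' hgc.aestronglyMeasurable (Filter.Eventually.of_forall hle)
  have gsq : Integrable fun q => ‖g q‖ ^ 2 :=
    hi2.mono' (by fun_prop) (Filter.Eventually.of_forall fun q => by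
      rw [Real.norm_of_nonneg (by positivity)]
      exact hle2 q)
  have g2 : MemLp g 2 := (memLp_two_iff_integrable_sq_norm hgc.aestronglyMeasurable).2 gsq
  refine ⟨osc_continuous g1, fun w => ?_, ?_⟩
  · refine (osc_norm_le g w).trans ((integral_mono g1.norm hi hle).trans_eq ?_)
    rw [integral_const_mul, integral_quartic₃ hct hb, Real.mul_rpow hc.le ht.le]
    ring
  · rw [hP g g1 g2]
    have e : ∫⁻ q, ‖g q‖ₑ ^ (2:ℝ) = ENNReal.ofReal (∫ q, ‖g q‖ ^ 2) := by
      rw [ofReal_integral_eq_lintegral_ofReal gsq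
        (Filter.Eventually.of_forall fun q => by positivity)]
      congr 1
      ext q
      rw [ENNReal.ofReal_pow (norm_nonneg _), ofReal_norm]
      norm_num
    rw [e, ← ENNReal.ofReal_mul hK.le]
    apply ENNReal.ofReal_le_ofReal
    have := integral_mono gsq hi2 hle2
    rw [integral_const_mul, integral_quartic₃ hct2 hb,
      Real.mul_rpow (by positivity) ht.le] at this
    refine (mul_le_mul_of_nonneg_left this hK.le).trans_eq ?_
    ring

/-- In the unprimed variables, `G` is the oscillatory integral of `Ĝ₂` times a unimodular phase. -/
lemma GreenG_eq_osc (A κ t x y z x' y' z' : ℝ) :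
    GreenG A κ t x y z x' y' z' = osc (fun q => Complex.exp (Complex.I *
      ((-(x' * q.1 + y' * (q.2.1 + A * q.1 * t) + z' * q.2.2) : ℝ) : ℂ)) *
        (Ghat2 A κ t q.1 q.2.1 q.2.2 : ℂ)) (x, y, z) := by
  unfold GreenG osc
  congr 1
  ext q
  rw [mul_assoc]
  congr 3
  push_cast
  ring

/-- In the primed variables, the shear moves from frequency to space, since
`x'ξ + y'(η + Aξt) + z'ζ = (x' + A t y')ξ + y'η + z'ζ`. -/
lemma GreenG_eq_osc' (A κ t x y z x' y' z' : ℝ) :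
    GreenG A κ t x y z x' y' z' = osc (fun q => Complex.exp (Complex.I *
      ((x * q.1 + y * q.2.1 + z * q.2.2 : ℝ) : ℂ)) *
        (Ghat2 A κ t q.1 q.2.1 q.2.2 : ℂ)) (-(x' + A * t * y'), -y', -z') := by
  unfold GreenG osc
  congr 1
  ext q
  rw [mul_comm (Complex.exp _) (Complex.exp (-Complex.I * _)), mul_assoc]
  congr 2
  push_cast
  ring

/-- With `m = T^{-3/4} B^{-1/4}`, the interpolated bound `((C₁ E m)^{r-2} (C₂ E² m))^{1/r}` is a
constant times `E m^{1 - 1/r}`. -/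
lemma exponent_identity {C₁ C₂ E T B r : ℝ} (hC₁ : 0 < C₁) (hC₂ : 0 < C₂) (hE : 0 < E) (hT : 0 < T)
    (hB : 0 < B) (hr : 2 ≤ r) :
    ((C₁ * E * (T ^ (-(3 / 4) : ℝ) * B ^ (-(1 / 4) : ℝ))) ^ (r - 2) *
      (C₂ * E ^ 2 * (T ^ (-(3 / 4) : ℝ) * B ^ (-(1 / 4) : ℝ)))) ^ (1 / r) =
    (C₁ ^ (r - 2) * C₂) ^ (1 / r) * E * T ^ (-(3:ℝ) / 4 * (1 - r⁻¹)) *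
      B ^ (-(1:ℝ) / 4 * (1 - r⁻¹)) := by
  have hr0 : r ≠ 0 := by linarith
  have hm : 0 < T ^ (-(3 / 4) : ℝ) * B ^ (-(1 / 4) : ℝ) := by positivity
  set m := T ^ (-(3 / 4) : ℝ) * B ^ (-(1 / 4) : ℝ) with hmdef
  have e1 : (C₁ * E * m) ^ (r - 2) * (C₂ * E ^ 2 * m) =
      (C₁ ^ (r - 2) * C₂) * E ^ r * m ^ (r - 1) := by
    rw [Real.mul_rpow (by positivity) hm.le, Real.mul_rpow hC₁.le hE.le]
    have h1 : E ^ r = E ^ (r - 2) * E ^ 2 := by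
      rw [← Real.rpow_natCast E 2, ← Real.rpow_add hE]
      norm_num
    have h2 : m ^ (r - 1) = m ^ (r - 2) * m := by
      conv_rhs => rw [← Real.rpow_one m, ← Real.rpow_mul hm.le, ← Real.rpow_add hm]
      congr 1
      ring
    rw [h1, h2]
    ring
  have e2 : m ^ ((r - 1) * (1 / r)) =
      T ^ (-(3:ℝ) / 4 * (1 - r⁻¹)) * B ^ (-(1:ℝ) / 4 * (1 - r⁻¹)) := by
    rw [hmdef, Real.mul_rpow (by positivity) (by positivity), ← Real.rpow_mul hT.le,
      ← Real.rpow_mul hB.le]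
    congr 2 <;> field_simp
  rw [e1, Real.mul_rpow (x := C₁ ^ (r - 2) * C₂ * E ^ r) (by positivity) (by positivity),
    Real.mul_rpow (x := C₁ ^ (r - 2) * C₂) (by positivity) (by positivity),
    ← Real.rpow_mul hE.le, ← Real.rpow_mul hm.le, mul_one_div_cancel hr0, Real.rpow_one, e2]
  ring

/-- The `L^∞` and `L²` bounds give the `L^p` bound for all `2 ≤ p ≤ ∞`; at `p = ∞` one has
`p⁻¹.toReal = 0`. -/
lemma eLpNorm_le_of_bounds {α : Type*} [MeasurableSpace α] {μ : Measure α} {f : α → ℂ}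
    {C₁ C₂ E T B : ℝ} (hC₁ : 0 < C₁) (hC₂ : 0 < C₂) (hE : 0 < E) (hT : 0 < T) (hB : 0 < B)
    (h1 : ∀ x, ‖f x‖ ≤ C₁ * E * (T ^ (-(3 / 4) : ℝ) * B ^ (-(1 / 4) : ℝ)))
    (h2 : ∫⁻ x, ‖f x‖ₑ ^ (2:ℝ) ∂μ ≤
      ENNReal.ofReal (C₂ * E ^ 2 * (T ^ (-(3 / 4) : ℝ) * B ^ (-(1 / 4) : ℝ))))
    {p : ℝ≥0∞} (hp : 2 ≤ p) :
    eLpNorm f p μ ≤ ENNReal.ofReal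
      ((if p = ∞ then C₁ else (C₁ ^ (p.toReal - 2) * C₂) ^ (1 / p.toReal)) * E *
        T ^ (-(3:ℝ) / 4 * (1 - p⁻¹.toReal)) * B ^ (-(1:ℝ) / 4 * (1 - p⁻¹.toReal))) := by
  split_ifs with hp'
  · subst hp'
    rw [eLpNorm_exponent_top]
    refine (eLpNormEssSup_le_of_ae_bound (Filter.Eventually.of_forall h1)).trans_eq ?_
    congr 1
    norm_num
    ring
  · refine (interp (by positivity) (by positivity) h1 h2 hp hp').trans_eq ?_
    rw [exponent_identity hC₁ hC₂ hE hT hB (by simpa using ENNReal.toReal_mono hp' hp),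
      ENNReal.toReal_inv]

/-- For every `2 ≤ p ≤ ∞` there is `C > 0` such that for all `t > 0` and all
points `(x', y', z')`, `(x, y, z)`:
(i) the `L^p` norm of `G(t, ·-x', ·, ·-z'; y')` in the unprimed variables, and
(ii) the `L^p` norm of `G(t, x-·, y, z-·; ·)` in the primed variables,
are both bounded by `C e^{-ε t} t^{-(3/4)(1 - 1/p)} (1 + (A t)⁴)^{-(1/4)(1 - 1/p)}`. -/
theorem stmt_5 (A κ ε : ℝ) (hA : 0 < A) (hκ0 : 0 < κ) (hε : 0 < ε)
    (hκ : 1 / 16 + ε < κ) :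
    ∀ p : ℝ≥0∞, 2 ≤ p → ∃ C : ℝ, 0 < C ∧
      ∀ t x y z x' y' z' : ℝ, 0 < t →
        eLpNorm (fun q : ℝ × ℝ × ℝ =>
            GreenG A κ t q.1 q.2.1 q.2.2 x' y' z') p volume ≤
          ENNReal.ofReal (C * Real.exp (-ε * t) *
            t ^ (-(3:ℝ)/4 * (1 - p⁻¹.toReal)) *
            (1 + (A * t) ^ 4) ^ (-(1:ℝ)/4 * (1 - p⁻¹.toReal))) ∧
        eLpNorm (fun q : ℝ × ℝ × ℝ =>
            GreenG A κ t x y z q.1 q.2.1 q.2.2) p volume ≤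
          ENNReal.ofReal (C * Real.exp (-ε * t) *
            t ^ (-(3:ℝ)/4 * (1 - p⁻¹.toReal)) *
            (1 + (A * t) ^ 4) ^ (-(1:ℝ)/4 * (1 - p⁻¹.toReal))) := by
  intro p hp
  obtain ⟨C₁, C₂, hC₁, hC₂, hosc⟩ := osc_bounds (A := A) hκ
  refine ⟨if p = ∞ then C₁ else (C₁ ^ (p.toReal - 2) * C₂) ^ (1 / p.toReal),
    by split_ifs <;> positivity, fun t x y z x' y' z' ht => ?_⟩
  have hB : 0 < 1 + (A * t) ^ 4 := by positivity
  have hcont := Ghat2_continuous A κ t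
  have hpos : ∀ q : ℝ × ℝ × ℝ, 0 ≤ Ghat2 A κ t q.1 q.2.1 q.2.2 := fun q => (Real.exp_pos _).le
  constructor
  · simp_rw [GreenG_eq_osc]
    obtain ⟨-, h1, h2⟩ := hosc t ht (fun q => Complex.exp (Complex.I *
      ((-(x' * q.1 + y' * (q.2.1 + A * q.1 * t) + z' * q.2.2) : ℝ) : ℂ)) *
        (Ghat2 A κ t q.1 q.2.1 q.2.2 : ℂ)) (by fun_prop)
      (fun q => norm_phase_mul _ (hpos q))
    exact eLpNorm_le_of_bounds hC₁ hC₂ (Real.exp_pos _) ht hB h1 h2 hp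
  · simp_rw [GreenG_eq_osc']
    obtain ⟨h0, h1, h2⟩ := hosc t ht (fun q => Complex.exp (Complex.I *
      ((x * q.1 + y * q.2.1 + z * q.2.2 : ℝ) : ℂ)) *
        (Ghat2 A κ t q.1 q.2.1 q.2.2 : ℂ)) (by fun_prop)
      (fun q => norm_phase_mul _ (hpos q))
    refine eLpNorm_le_of_bounds hC₁ hC₂ (Real.exp_pos _) ht hB (fun w => h1 _) ?_ hp
    refine le_trans (le_of_eq ?_) h2
    exact (shear_mp (A * t)).lintegral_comp
      (f := fun w => ‖osc (fun q => Complex.exp (Complex.I *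
        ((x * q.1 + y * q.2.1 + z * q.2.2 : ℝ) : ℂ)) *
          (Ghat2 A κ t q.1 q.2.1 q.2.2 : ℂ)) w‖ₑ ^ (2:ℝ)) (by fun_prop)
end
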